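/- Let r ≥ 1, let (T, ξ_T, I_T) be an i'-overlapping tree for some i' ∈ {1,2,3,4}, let i ∈ {1,2,3,4} with i ≠ i', and let ω_T be the dyadic interval of length |I_T|^{-1} containing ξ_T, p_T = I_T × ω_T. Then for all real coefficients (c_P)_{P∈T} and every x ∈ [0,∞): ‖ ∑_{P ∈ T : |I_P| ≥ 2^k} c_P φ_{P_i}(x) ‖_{V^r_k} = ‖ A_k[ sgn(φ_{p_T}) ∑_{P ∈ T} c_P φ_{P_i} ](x) ‖_{V^r_k}. -/

import Mathlib

/-!
On `I_P` with `P ∈ T`, the packet `φ_{p_T}` is a constant multiple of `φ_{P_{i'}}`, because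
`ω_T ⊆ ω_{P_{i'}}`. In the product of the Walsh functions of `φ_{P_{i'}}` and `φ_{P_i}` all bits
but the two lowest cancel, so `h_P = sgn(φ_{p_T}) φ_{P_i}` is a Haar-type function: it is constant
on dyadic intervals of length `2^(-s) |I_P|` and takes opposite values on dyadic siblings of that
length (`signed_wp_eq`). Here `s = 1` if `i` and `i'` differ only in the lowest bit (counting from
zero) and `s = 2` otherwise; in particular `s` is the same for every `P ∈ T`.

Consequently `A_k h_P = h_P` if `2^k ≤ 2^(-s) |I_P|` (`dyadicAvg_haar_of_le`) and `A_k h_P = 0`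
otherwise (`dyadicAvg_haar_of_lt`). Summing over `P`, the average `A_k` of the signed tree sum at
`x` equals `sgn(φ_{p_T}(x))` times the sum truncated at `|I_P| ≥ 2^(k+s)`. The variation does not
see the shift by `s` or, for `x ∈ I_T`, the sign (`varNorm_shift`); for `x ∉ I_T` both sides are
zero.

Everything is expressed through the positions `⌊y / 2^k⌋` and the Rademacher signs
`(-1)^⌊y / 2^k⌋`: the Walsh function of index `n` on a dyadic interval of length `2^k` is the
product of the Rademacher signs at the scales `k - 1 - j` over the binary digits `j` of `n`.
-/

open MeasureTheory Set
open scoped ENNReal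

noncomputable section

/-- A dyadic interval `[n 2^k, (n+1) 2^k) ⊆ [0,∞)`. -/
structure DyadicInterval where
  n : ℕ
  k : ℤ
  deriving DecidableEq

namespace DyadicInterval

/-- The length `2^k` of a dyadic interval. -/
def len (I : DyadicInterval) : ℝ := 2 ^ I.k

/-- The left endpoint `n 2^k` of a dyadic interval. -/
def lo (I : DyadicInterval) : ℝ := I.n * 2 ^ I.k

/-- A dyadic interval as a subset of `ℝ`. -/
def toSet (I : DyadicInterval) : Set ℝ := Set.Ico I.lo (I.lo + I.len)

end DyadicInterval

/-- The Walsh function of index `m` (Paley ordering): for `y ∈ [0,1)` with binary digits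
`y_i`, `W_m(y) = (-1)^{∑ m_i y_i}`. -/
def walshF (m : ℕ) (y : ℝ) : ℝ :=
  ∏ i ∈ Finset.range m, if m.testBit i then (-1 : ℝ) ^ ⌊y * 2 ^ (i + 1)⌋ else 1

/-- The Walsh wave packet of the rectangle `I × ω`.  For a tile (a rectangle of area one) this
is the unique family satisfying `φ_{I×[0,2^n)} = |I|^{-1/2} 1_I` together with the recursions
`φ_{I×ω_r} = (φ_{I_l×ω} − φ_{I_r×ω})/√2` and `φ_{I×ω_l} = (φ_{I_l×ω} + φ_{I_r×ω})/√2`. -/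
def wavePacket (I ω : DyadicInterval) (x : ℝ) : ℝ :=
  I.toSet.indicator (fun x => I.len ^ (-(1 : ℝ) / 2) * walshF ω.n ((x - I.lo) / I.len)) x

/-- `⟨f, g⟩ = ∫_0^∞ f g`. -/
def innerF (f g : ℝ → ℝ) : ℝ := ∫ x in Set.Ici (0 : ℝ), f x * g x

/-- A tile: a dyadic rectangle of area one. -/
structure Tile where
  I : DyadicInterval
  ω : DyadicInterval
  area : I.k + ω.k = 0

/-- The Walsh wave packet of a tile. -/
def Tile.wp (p : Tile) : ℝ → ℝ := wavePacket p.I p.ω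

/-- A tile as a subset of `[0,∞) × [0,∞)`. -/
def Tile.toSet (p : Tile) : Set (ℝ × ℝ) := p.I.toSet ×ˢ p.ω.toSet

/-- A quartile: a dyadic rectangle of area four. -/
structure Quartile where
  I : DyadicInterval
  ω : DyadicInterval
  area : I.k + ω.k = 2

namespace Quartile

/-- The frequency interval `ω_{P_{i+1}}` (the `i`-th dyadic grandchild of `ω_P`, `i : Fin 4`,
in increasing order). -/
def freq (P : Quartile) (i : Fin 4) : DyadicInterval := ⟨4 * P.ω.n + i.val, P.ω.k - 2⟩

/-- The tile `P_{i+1} = I_P × ω_{P_{i+1}}` as a subset of the plane, for `i : Fin 4`. -/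
def subtileSet (P : Quartile) (i : Fin 4) : Set (ℝ × ℝ) := P.I.toSet ×ˢ (P.freq i).toSet

/-- The Walsh wave packet `φ_{P_{i+1}}` for `i : Fin 4`. -/
def wp (P : Quartile) (i : Fin 4) : ℝ → ℝ := wavePacket P.I (P.freq i)

end Quartile

instance : DecidableEq Quartile := fun P Q =>
  decidable_of_iff (P.I = Q.I ∧ P.ω = Q.ω) (by cases P; cases Q; simp)

/-- `(T, ξ, I_T)` is a tree: `ξ ∈ [0,∞)` and every `P ∈ T` has `I_P ⊆ I_T` and `ξ ∈ ω_P`. -/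
def IsTree (T : Finset Quartile) (ξ : ℝ) (It : DyadicInterval) : Prop :=
  0 ≤ ξ ∧ ∀ P ∈ T, P.I.toSet ⊆ It.toSet ∧ ξ ∈ P.ω.toSet

/-- An `i`-overlapping tree (`i : Fin 4` indexes `P_1,…,P_4`): `ξ_T ∈ ω_{P_{i+1}}` for all `P`. -/
def IsOverlapping (i : Fin 4) (T : Finset Quartile) (ξ : ℝ) (It : DyadicInterval) : Prop :=
  IsTree T ξ It ∧ ∀ P ∈ T, ξ ∈ (P.freq i).toSet

/-- An `i`-lacunary tree: `j`-overlapping for some `j ≠ i`. -/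
def IsLacunary (i : Fin 4) (T : Finset Quartile) (ξ : ℝ) (It : DyadicInterval) : Prop :=
  ∃ j, j ≠ i ∧ IsOverlapping j T ξ It

/-- `ω_T`: the dyadic interval of length `|I_T|⁻¹` containing `ξ`; `p_T = I_T × ω_T`. -/
def topFreq (It : DyadicInterval) (ξ : ℝ) : DyadicInterval := ⟨(⌊ξ * 2 ^ It.k⌋).toNat, -It.k⟩

/-- The dyadic interval of length `2^k` containing `x ≥ 0`. -/
def dyadicPiece (k : ℤ) (x : ℝ) : Set ℝ :=
  Set.Ico ((⌊x / 2 ^ k⌋ : ℝ) * 2 ^ k) (((⌊x / 2 ^ k⌋ : ℝ) + 1) * 2 ^ k)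

/-- The dyadic averaging operator `A_k[f](x) = |I|⁻¹ ∫_I f` with `I ∋ x` dyadic, `|I| = 2^k`. -/
def dyadicAvg (k : ℤ) (f : ℝ → ℝ) (x : ℝ) : ℝ :=
  ((2 : ℝ) ^ k)⁻¹ * ∫ y in dyadicPiece k x, f y

/-- The `r`-variation seminorm of `g : ℤ → ℝ` over the index set `S ⊆ ℤ`:
the supremum of `(∑_{j=1}^N |g(k_j) − g(k_{j−1})|^r)^{1/r}` over finite increasing
sequences `k_0 < ⋯ < k_N` in `S`. -/
def varNorm (r : ℝ) (S : Set ℤ) (g : ℤ → ℝ) : ℝ≥0∞ :=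
  ⨆ (N : ℕ) (k : ℕ → ℤ) (_ : StrictMono k) (_ : ∀ j ≤ N, k j ∈ S),
    (∑ j ∈ Finset.range N, ENNReal.ofReal (|g (k (j + 1)) - g (k j)| ^ r)) ^ (1 / r)

/-- The dyadic `L^t` Hardy–Littlewood maximal operator `M^t[f](x) = sup_k (A_k[|f|^t](x))^{1/t}`. -/
def maxOp (t : ℝ) (f : ℝ → ℝ) (x : ℝ) : ℝ≥0∞ :=
  ⨆ k : ℤ, ((ENNReal.ofReal ((2 : ℝ) ^ k))⁻¹ *
    ∫⁻ y in dyadicPiece k x, ENNReal.ofReal (|f y| ^ t)) ^ (1 / t)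

/-- Given a strictly increasing `kk : ℤ → ℤ` and coefficients `a : ℤ → ℝ`, the coefficient
`a_m` where `m` is the (unique) integer with `kk (m-1) ≤ K < kk m` (`K = log₂|I_P|`),
and `0` if no such `m` exists. -/
def linCoeff (kk : ℤ → ℤ) (a : ℤ → ℝ) (K : ℤ) : ℝ :=
  letI := Classical.propDecidable (∃ m : ℤ, kk (m - 1) ≤ K ∧ K < kk m)
  if h : ∃ m : ℤ, kk (m - 1) ≤ K ∧ K < kk m then a h.choose else 0

/-- Linearization data for the `r`-variation: measurably in `x`, a strictly increasing
sequence of integers `k_j(x)` and coefficients `a_j(x)` with `∑_j |a_j(x)|^{r'} ≤ 1`,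
`r' = r/(r-1)`. -/
structure LinData (r : ℝ) where
  kseq : ℝ → ℤ → ℤ
  aseq : ℝ → ℤ → ℝ
  mono : ∀ x, StrictMono (kseq x)
  meas_k : ∀ j, Measurable fun x => kseq x j
  meas_a : ∀ j, Measurable fun x => aseq x j
  abound : ∀ x, ∀ s : Finset ℤ, ∑ j ∈ s, |aseq x j| ^ (r / (r - 1)) ≤ 1

/-- `a_P(x)` for a quartile `P`. -/
def LinData.coeff {r : ℝ} (L : LinData r) (P : Quartile) (x : ℝ) : ℝ :=
  linCoeff (L.kseq x) (L.aseq x) P.I.k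

/-- The modified wave packets: `φ̃_{P_3}(x) = a_P(x) φ_{P_3}(x)` and `φ̃_{P_i} = φ_{P_i}`
for `i ≠ 3` (here `i : Fin 4`, so index `2` plays the role of `3`). -/
def LinData.wp {r : ℝ} (L : LinData r) (P : Quartile) (i : Fin 4) (x : ℝ) : ℝ :=
  (if i = (2 : Fin 4) then L.coeff P x else 1) * P.wp i x

/-- `size_i(Ps, f)`: the sup of `(|I_T|⁻¹ ∑_{P ∈ T} |⟨f, φ̃_{P_i}⟩|²)^{1/2}` over
`i`-lacunary trees `T ⊆ Ps`. -/
def treeSize {r : ℝ} (L : LinData r) (i : Fin 4) (Ps : Set Quartile) (f : ℝ → ℝ) : ℝ≥0∞ :=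
  ⨆ (T : Finset Quartile) (ξ : ℝ) (It : DyadicInterval)
    (_ : IsLacunary i T ξ It) (_ : (T : Set Quartile) ⊆ Ps),
    ENNReal.ofReal ((It.len)⁻¹ * ∑ P ∈ T, innerF f (L.wp P i) ^ 2) ^ ((1 : ℝ) / 2)

/-- Lebesgue measure restricted to `[0,∞)`. -/
def mu0 : Measure ℝ := volume.restrict (Set.Ici 0)

end

/-! ### Dyadic positions and Rademacher signs -/

/-- The position `⌊y / 2^k⌋` of the dyadic interval of length `2^k` containing `y`. -/
noncomputable def dyPos (k : ℤ) (y : ℝ) : ℤ := ⌊y / 2 ^ k⌋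

/-- The Rademacher sign at scale `k`: `+1` or `-1` according to the parity of `dyPos k y`, that is,
according to whether `y` lies in the left or right half of its dyadic interval of length
`2^(k+1)`. -/
noncomputable def radSign (k : ℤ) (y : ℝ) : ℝ := (-1) ^ dyPos k y

lemma dyPos_add (k : ℤ) (d : ℕ) (y : ℝ) : dyPos (k + d) y = dyPos k y / 2 ^ d := by
  have h := Int.floor_div_natCast (y / 2 ^ k) (2 ^ d)
  unfold dyPos
  rw [zpow_add₀ (by norm_num), ← div_div]
  push_cast at h
  simpa using h

lemma dyPos_sub_one_div (k : ℤ) (y : ℝ) : dyPos (k - 1) y / 2 = dyPos k y := by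
  have := dyPos_add (k - 1) 1 y
  simp at this
  exact this.symm

lemma dyPos_add_self (m : ℤ) (y : ℝ) : dyPos m (y + 2 ^ m) = dyPos m y + 1 := by
  unfold dyPos
  rw [add_div, div_self (by positivity), Int.floor_add_one]

lemma measurable_dyPos (k : ℤ) : Measurable (dyPos k) :=
  Int.measurable_floor.comp (measurable_id.div_const _)

lemma measurable_radSign (k : ℤ) : Measurable (radSign k) :=
  (measurable_from_top (f := fun z : ℤ => (-1 : ℝ) ^ z)).comp (measurable_dyPos k)

lemma radSign_mul_self (k : ℤ) (y : ℝ) : radSign k y * radSign k y = 1 := by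
  unfold radSign
  rw [← zpow_add₀ (by norm_num)]
  exact (Even.add_self _).neg_one_zpow

lemma abs_radSign (k : ℤ) (y : ℝ) : |radSign k y| = 1 := by
  unfold radSign; simp [abs_zpow]

lemma mem_toSet_iff (I : DyadicInterval) (y : ℝ) : y ∈ I.toSet ↔ dyPos I.k y = I.n := by
  unfold DyadicInterval.toSet DyadicInterval.lo DyadicInterval.len dyPos
  have h : (0 : ℝ) < 2 ^ I.k := by positivity
  rw [Int.floor_eq_iff, le_div_iff₀ h, div_lt_iff₀ h, Set.mem_Ico]
  push_cast
  rw [add_mul, one_mul]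

lemma mem_dyadicPiece_iff (k : ℤ) (x y : ℝ) : y ∈ dyadicPiece k x ↔ dyPos k y = dyPos k x := by
  unfold dyadicPiece dyPos
  have h : (0 : ℝ) < 2 ^ k := by positivity
  rw [Int.floor_eq_iff (a := y / 2 ^ k), le_div_iff₀ h, div_lt_iff₀ h, Set.mem_Ico]

/-! ### Walsh functions as products of Rademacher signs -/

/-- The Walsh function with index `n` on a dyadic interval of length `2^k`, with only the bits
below `N` of `n` taken into account. -/
noncomputable def walshProd (n : ℕ) (k : ℤ) (N : ℕ) (y : ℝ) : ℝ :=
  ∏ j ∈ Finset.range N, if n.testBit j then radSign (k - 1 - j) y else 1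

lemma walshProd_of_le (n : ℕ) (k : ℤ) {N : ℕ} (hN : n ≤ N) (y : ℝ) :
    walshProd n k N y = walshProd n k n y := by
  unfold walshProd
  symm
  apply Finset.prod_subset (Finset.range_mono hN)
  intro j _ hj
  have : n < 2 ^ j := lt_of_le_of_lt (by simpa using hj) Nat.lt_two_pow_self
  simp [Nat.testBit_lt_two_pow this]

lemma walshProd_mul_self (n : ℕ) (k : ℤ) (N : ℕ) (y : ℝ) :
    walshProd n k N y * walshProd n k N y = 1 := by
  unfold walshProd
  rw [← Finset.prod_mul_distrib]
  apply Finset.prod_eq_one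
  intro j _
  split_ifs <;> simp [radSign_mul_self]

lemma abs_walshProd (n : ℕ) (k : ℤ) (N : ℕ) (y : ℝ) : |walshProd n k N y| = 1 := by
  have := walshProd_mul_self n k N y
  rw [← abs_mul_abs_self] at this
  nlinarith [abs_nonneg (walshProd n k N y)]

lemma walshF_rescale (I : DyadicInterval) (n : ℕ) (y : ℝ) :
    walshF n ((y - I.lo) / I.len) = walshProd n I.k n y := by
  unfold walshF walshProd
  refine Finset.prod_congr rfl fun j _ => ?_
  split_ifs with hj
  · -- Translating by the left endpoint changes the position at scale `2^(k-1-j)` by an even number.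
    have h1 : (y - I.lo) / I.len * 2 ^ (j + 1) =
        y / 2 ^ (I.k - 1 - j) - ((2 * (I.n * 2 ^ j : ℤ) : ℤ) : ℝ) := by
      unfold DyadicInterval.lo DyadicInterval.len
      have : (2 : ℝ) ^ (I.k - 1 - j) = 2 ^ I.k / 2 ^ (j + 1) := by
        rw [sub_sub, zpow_sub₀ (by norm_num)]
        congr 1
        rw [add_comm]; exact_mod_cast zpow_natCast (2 : ℝ) (j + 1)
      rw [this]
      push_cast
      field_simp
      ring
    rw [h1, Int.floor_sub_intCast, zpow_sub₀ (by norm_num), (even_two_mul _).neg_one_zpow, div_one]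
    rfl
  · rfl

lemma wavePacket_eq (I ω : DyadicInterval) (y : ℝ) :
    wavePacket I ω y =
      if dyPos I.k y = I.n then I.len ^ (-(1 : ℝ) / 2) * walshProd ω.n I.k ω.n y else 0 := by
  unfold wavePacket
  classical
  rw [Set.indicator_apply]
  simp only [mem_toSet_iff, walshF_rescale]

lemma sign_wavePacket (I ω : DyadicInterval) (y : ℝ) :
    Real.sign (wavePacket I ω y) =
      if dyPos I.k y = I.n then walshProd ω.n I.k ω.n y else 0 := by
  rw [wavePacket_eq]
  have hl : (0 : ℝ) < I.len ^ (-(1 : ℝ) / 2) :=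
    Real.rpow_pos_of_pos (by unfold DyadicInterval.len; positivity) _
  split_ifs with h
  · rcases eq_or_eq_neg_of_abs_eq (abs_walshProd ω.n I.k ω.n y) with h1 | h1
    · rw [h1, mul_one, Real.sign_of_pos hl]
    · rw [h1, mul_neg_one, Real.sign_of_neg (by linarith)]
  · simp

/-- The low `d` bits of a Walsh index contribute a factor that is constant on dyadic intervals of
length `2^a`; the rest is the Walsh function of index `n / 2^d` at scale `a`. -/
lemma walshProd_split (n : ℕ) (a : ℤ) (d : ℕ) :
    ∃ E : ℤ → ℝ, ∀ (N : ℕ) (y : ℝ),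
      walshProd n (a + d) (d + N) y = E (dyPos a y) * walshProd (n / 2 ^ d) a N y := by
  refine ⟨fun z => ∏ j ∈ Finset.range d,
    if n.testBit j then (-1 : ℝ) ^ (z / 2 ^ (d - 1 - j)) else 1, fun N y => ?_⟩
  unfold walshProd
  rw [Finset.prod_range_add]
  congr 1
  · refine Finset.prod_congr rfl fun j hj => ?_
    have hj : j < d := by simpa using hj
    unfold radSign
    rw [← dyPos_add]
    have : a + (d : ℤ) - 1 - j = a + ((d - 1 - j : ℕ) : ℤ) := by omega
    rw [this]
  · refine Finset.prod_congr rfl fun j _ => ?_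
    rw [Nat.testBit_div_two_pow, add_comm j d]
    have : a + (d : ℤ) - 1 - ((d + j : ℕ) : ℤ) = a - 1 - j := by push_cast; ring
    rw [this]

/-- For Walsh indices `4 * q + u` and `4 * q + v` the bits of `q` cancel in the product, so that only
the two lowest bits survive. -/
lemma walshProd_mul_sibling (q u v : ℕ) (hu : u < 4) (hv : v < 4) (a : ℤ) (N : ℕ) (y : ℝ) :
    walshProd (4 * q + u) a (N + 2) y * walshProd (4 * q + v) a (N + 2) y =
      ((if u.testBit 0 then radSign (a - 1) y else 1) *
        (if v.testBit 0 then radSign (a - 1) y else 1)) *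
      ((if u.testBit 1 then radSign (a - 2) y else 1) *
        (if v.testBit 1 then radSign (a - 2) y else 1)) := by
  have key : ∀ w < 4, walshProd (4 * q + w) a (N + 2) y =
      (if w.testBit 0 then radSign (a - 1) y else 1) *
      (if w.testBit 1 then radSign (a - 2) y else 1) * walshProd q (a - 2) N y := by
    intro w hw
    have hb := Nat.testBit_two_pow_mul_add q (i := 2) (b := w) (by simpa using hw)
    norm_num at hb
    unfold walshProd
    rw [Finset.prod_range_succ', Finset.prod_range_succ']
    have e0 : a - 1 - ((0 : ℕ) : ℤ) = a - 1 := by simp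
    have e1 : a - 1 - ((0 + 1 : ℕ) : ℤ) = a - 2 := by push_cast; ring
    have e2 : ∀ j : ℕ, a - 1 - ((j + 1 + 1 : ℕ) : ℤ) = a - 2 - 1 - j := fun j => by
      push_cast; ring
    have b0 : (4 * q + w).testBit 0 = w.testBit 0 := by rw [hb, if_pos (by norm_num)]
    have b1 : (4 * q + w).testBit (0 + 1) = w.testBit 1 := by rw [hb, if_pos (by norm_num)]
    have b2 : ∀ j, (4 * q + w).testBit (j + 1 + 1) = q.testBit j := fun j => by
      rw [hb, if_neg (by omega)]; rfl
    rw [b0, b1, e0, e1, mul_assoc, mul_comm]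
    simp only [e2, b2]
    congr 1
    exact mul_comm _ _
  rw [key u hu, key v hv]
  have := walshProd_mul_self q (a - 2) N y
  linear_combination (((if u.testBit 0 then radSign (a - 1) y else 1) *
        (if v.testBit 0 then radSign (a - 1) y else 1)) *
      ((if u.testBit 1 then radSign (a - 2) y else 1) *
        (if v.testBit 1 then radSign (a - 2) y else 1))) * this

/-! ### Signed wave packets are Haar functions -/

/-- The scale shift: a wave packet `φ_{P_i}`, signed by `φ_{p_T}`, is a Haar-type function with
cancellation at scale `2^(-s) |I_P|`, where `s = 1` if `i` and `i'` differ only in their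
lowest bit and `s = 2` otherwise. -/
def scaleShift (i i' : Fin 4) : ℕ := if i.val / 2 = i'.val / 2 then 1 else 2

lemma tree_scale_le {P : Quartile} {It : DyadicInterval} (h : P.I.toSet ⊆ It.toSet) :
    P.I.k ≤ It.k := by
  have hp : (0 : ℝ) < 2 ^ P.I.k := by positivity
  unfold DyadicInterval.toSet DyadicInterval.len at h
  rw [Set.Ico_subset_Ico_iff (by linarith)] at h
  have : (2 : ℝ) ^ P.I.k ≤ 2 ^ It.k := by linarith
  exact (zpow_le_zpow_iff_right₀ (by norm_num)).1 this

lemma topFreq_div {P : Quartile} {It : DyadicInterval} {ξ : ℝ} {i' : Fin 4} (d : ℕ)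
    (hξ : 0 ≤ ξ) (hd : It.k = P.I.k + d) (h : ξ ∈ (P.freq i').toSet) :
    (topFreq It ξ).n / 2 ^ d = 4 * P.ω.n + i'.val := by
  rw [mem_toSet_iff] at h
  have e1 : (P.freq i').k = -It.k + d := by
    have := P.area
    simp only [Quartile.freq]; omega
  have e2 : (P.freq i').n = 4 * P.ω.n + i'.val := rfl
  rw [e1, e2, dyPos_add] at h
  have e3 : dyPos (-It.k) ξ = ⌊ξ * 2 ^ It.k⌋ := by
    unfold dyPos; rw [zpow_neg, div_inv_eq_mul]
  have hn : 0 ≤ ⌊ξ * 2 ^ It.k⌋ := Int.floor_nonneg.2 (by positivity)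
  have e4 : ((topFreq It ξ).n : ℤ) = dyPos (-It.k) ξ := by
    rw [e3]; exact Int.toNat_of_nonneg hn
  rw [← e4] at h
  exact_mod_cast h

/-- On `I_P` the top packet `φ_{p_T}` is a constant multiple of `φ_{P_{i'}}`, since
`ω_T ⊆ ω_{P_{i'}}`. Hence `sgn(φ_{p_T}) φ_{P_i}` is a function of the dyadic interval of length
`2^(m+1)` times the Rademacher sign at scale `m`, where `2^m = 2^(-s) |I_P|`. -/
lemma signed_wp_eq {P : Quartile} {It : DyadicInterval} {ξ : ℝ} {i i' : Fin 4} (hne : i ≠ i')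
    (hξ : 0 ≤ ξ) (hsub : P.I.toSet ⊆ It.toSet) (h : ξ ∈ (P.freq i').toSet) :
    ∃ G : ℤ → ℝ, ∀ y, Real.sign (wavePacket It (topFreq It ξ) y) * P.wp i y =
      G (dyPos (P.I.k - scaleShift i i' + 1) y) * radSign (P.I.k - scaleShift i i') y := by
  obtain ⟨d, hd⟩ := Int.le.dest (tree_scale_le hsub)
  have hdiv := topFreq_div d hξ hd.symm h
  obtain ⟨E, hE⟩ := walshProd_split (topFreq It ξ).n P.I.k d
  set L : ℝ := P.I.len ^ (-(1 : ℝ) / 2) with hL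
  set E' : ℤ → ℝ := fun z => if z = P.I.n then L * E z else 0 with hE'
  have main : ∀ y, Real.sign (wavePacket It (topFreq It ξ) y) * P.wp i y =
      E' (dyPos P.I.k y) *
      (((if i'.val.testBit 0 then radSign (P.I.k - 1) y else 1) *
        (if i.val.testBit 0 then radSign (P.I.k - 1) y else 1)) *
      ((if i'.val.testBit 1 then radSign (P.I.k - 2) y else 1) *
        (if i.val.testBit 1 then radSign (P.I.k - 2) y else 1))) := by
    intro y
    rw [sign_wavePacket]
    unfold Quartile.wp
    rw [wavePacket_eq]
    by_cases hy : dyPos P.I.k y = P.I.n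
    · have hy' : dyPos It.k y = It.n :=
        (mem_toSet_iff _ _).1 (hsub ((mem_toSet_iff _ _).2 hy))
      -- a common number of bits, large enough for all three Walsh indices involved
      set M := (topFreq It ξ).n + (4 * P.ω.n + i'.val) + (4 * P.ω.n + i.val) with hM
      have hf : (P.freq i).n = 4 * P.ω.n + i.val := rfl
      rw [if_pos hy', if_pos hy, hf,
        ← walshProd_of_le (topFreq It ξ).n It.k (N := d + (M + 2)) (by omega),
        ← walshProd_of_le (4 * P.ω.n + i.val) P.I.k (N := M + 2) (by omega), ← hd, hE, hdiv,
        ← walshProd_mul_sibling P.ω.n i'.val i.val i'.2 i.2 P.I.k M y]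
      simp only [hE', if_pos hy]
      ring
    · simp [hE', hy]
  have hsq := radSign_mul_self
  have p1 : ∀ y, dyPos (P.I.k - 2 + 1) y = dyPos (P.I.k - 1) y := fun y => by
    congr 1; ring
  have q1 : ∀ y, dyPos (P.I.k - 1) y / 2 = dyPos P.I.k y := dyPos_sub_one_div P.I.k
  by_cases h2 : i.val / 2 = i'.val / 2
  · refine ⟨E', fun y => ?_⟩
    rw [main, scaleShift, if_pos h2]
    have hs := hsq (P.I.k - 2) y
    fin_cases i <;> fin_cases i' <;> simp [Nat.testBit] at h2 hne hs ⊢ <;> simp [hs]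
  · refine ⟨fun z => E' (z / 2) *
      (if i.val % 2 = i'.val % 2 then 1 else (-1) ^ z), fun y => ?_⟩
    rw [main, scaleShift, if_neg h2]
    have hs := hsq (P.I.k - 1) y
    have hr : (-1 : ℝ) ^ dyPos (P.I.k - 1) y = radSign (P.I.k - 1) y := rfl
    push_cast
    simp only [p1, q1, hr]
    fin_cases i <;> fin_cases i' <;> simp [Nat.testBit] at h2 hne hs ⊢ <;> simp [hs, mul_assoc]

/-! ### Dyadic averages of Haar functions -/

lemma integrableOn_haar (G : ℤ → ℝ) (m k : ℤ) (x : ℝ) :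
    IntegrableOn (fun y => G (dyPos (m + 1) y) * radSign m y) (dyadicPiece k x) := by
  set u : ℝ := (⌊x / 2 ^ k⌋ : ℝ) * 2 ^ k with hu
  set v : ℝ := ((⌊x / 2 ^ k⌋ : ℝ) + 1) * 2 ^ k with hv
  have hmeas : Measurable (fun y => G (dyPos (m + 1) y) * radSign m y) :=
    ((measurable_from_top (f := G)).comp (measurable_dyPos (m + 1))).mul (measurable_radSign m)
  -- Only finitely many positions at scale `2^(m+1)` meet a bounded interval.
  refine Measure.integrableOn_of_bounded
    (M := ∑ z ∈ Finset.Icc (dyPos (m + 1) u) (dyPos (m + 1) v), |G z|)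
    (by unfold dyadicPiece; exact measure_Ico_lt_top.ne) hmeas.aestronglyMeasurable ?_
  refine (ae_restrict_iff' (by unfold dyadicPiece; exact measurableSet_Ico)).2
    (Filter.Eventually.of_forall fun y hy => ?_)
  have hp : (0 : ℝ) < 2 ^ (m + 1) := by positivity
  have hy' : u ≤ y ∧ y < v := hy
  rw [Real.norm_eq_abs, abs_mul, abs_radSign, mul_one]
  refine Finset.single_le_sum (f := fun z => |G z|) (fun z _ => abs_nonneg _)
    (Finset.mem_Icc.2 ⟨?_, ?_⟩)
  · exact Int.floor_le_floor ((div_le_div_iff_of_pos_right hp).2 hy'.1)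
  · exact Int.floor_le_floor ((div_le_div_iff_of_pos_right hp).2 hy'.2.le)

/-- The average vanishes at scales above the cancellation scale `m`, because translation by `2^m`
exchanges the two halves of each dyadic interval of length `2^(m+1)` and changes the sign. -/
lemma dyadicAvg_haar_of_lt (G : ℤ → ℝ) {m k : ℤ} (hmk : m < k) (x : ℝ) :
    dyadicAvg k (fun y => G (dyPos (m + 1) y) * radSign m y) x = 0 := by
  classical
  have hJ : MeasurableSet (dyadicPiece k x) := by unfold dyadicPiece; exact measurableSet_Ico
  set F : ℝ → ℝ := (dyadicPiece k x).indicator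
    (fun y => G (dyPos (m + 1) y) * radSign m y) with hF
  have hint : Integrable F := (integrable_indicator_iff hJ).2 (integrableOn_haar G m k x)
  set E : Set ℝ := {y | Even (dyPos m y)} with hE
  have hEm : MeasurableSet E := measurable_dyPos m (MeasurableSet.of_discrete (s := {z | Even z}))
  have hpos : ∀ y ∈ E, ∀ l, m < l → dyPos l (y + 2 ^ m) = dyPos l y := by
    intro y hy l hl
    obtain ⟨d, rfl⟩ := Int.le.dest (show m + 1 ≤ l by omega)
    rw [dyPos_add, dyPos_add]
    congr 1
    have h1 := dyPos_add m 1 (y + 2 ^ m)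
    have h2 := dyPos_add m 1 y
    rw [dyPos_add_self] at h1
    obtain ⟨t, ht⟩ : Even (dyPos m y) := hy
    push_cast at h1 h2
    omega
  have hflip : ∀ y, Eᶜ.indicator F (y + 2 ^ m) = -E.indicator F y := by
    intro y
    have hiff : y + 2 ^ m ∈ Eᶜ ↔ y ∈ E := by
      simp only [hE, Set.mem_compl_iff, Set.mem_ofPred_eq, dyPos_add_self, Int.even_add_one, not_not]
    by_cases hy : y ∈ E
    · rw [Set.indicator_of_mem (hiff.2 hy), Set.indicator_of_mem hy]
      simp only [hF, Set.indicator_apply, mem_dyadicPiece_iff, hpos y hy k hmk,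
        hpos y hy (m + 1) (by omega)]
      have : radSign m (y + 2 ^ m) = -radSign m y := by
        unfold radSign
        rw [dyPos_add_self, zpow_add_one₀ (by norm_num), mul_neg_one]
      rw [this]
      split_ifs <;> simp
    · rw [Set.indicator_of_notMem (fun h => hy (hiff.1 h)), Set.indicator_of_notMem hy, neg_zero]
  have hzero : ∫ y, F y = 0 := by
    rw [← integral_add_compl hEm hint, ← integral_indicator hEm, ← integral_indicator hEm.compl,
      ← integral_add_right_eq_self (Eᶜ.indicator F) ((2 : ℝ) ^ m)]
    simp only [hflip, integral_neg, add_neg_cancel]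
  unfold dyadicAvg
  rw [← integral_indicator hJ, hzero, mul_zero]

lemma dyadicAvg_haar_of_le (G : ℤ → ℝ) {m k : ℤ} (hkm : k ≤ m) (x : ℝ) :
    dyadicAvg k (fun y => G (dyPos (m + 1) y) * radSign m y) x =
      G (dyPos (m + 1) x) * radSign m x := by
  have hpos : ∀ l, k ≤ l → ∀ y ∈ dyadicPiece k x, dyPos l y = dyPos l x := by
    intro l hl y hy
    obtain ⟨d, rfl⟩ := Int.le.dest hl
    rw [dyPos_add, dyPos_add, (mem_dyadicPiece_iff k x y).1 hy]
  unfold dyadicAvg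
  rw [setIntegral_congr_fun (g := fun _ => G (dyPos (m + 1) x) * radSign m x)
    (by unfold dyadicPiece; exact measurableSet_Ico)
    (fun y hy => by simp only [radSign, hpos m hkm y hy, hpos (m + 1) (by omega) y hy])]
  have h : (0 : ℝ) < 2 ^ k := by positivity
  have hvol : volume.real (dyadicPiece k x) = 2 ^ k := by
    unfold dyadicPiece
    rw [Real.volume_real_Ico_of_le (by nlinarith)]
    ring
  rw [setIntegral_const, hvol, smul_eq_mul]
  exact inv_mul_cancel_left₀ (ne_of_gt h) _

/-! ### Invariance of the variation -/

lemma varNorm_shift_le (r : ℝ) (g : ℤ → ℝ) (s : ℤ) (e : ℝ) (he : |e| = 1) :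
    varNorm r Set.univ (fun k => e * g (k + s)) ≤ varNorm r Set.univ g := by
  unfold varNorm
  refine iSup_le fun N => iSup_le fun k => iSup_le fun hk => iSup_le fun _ => ?_
  refine le_trans (le_of_eq ?_) (le_iSup_of_le N (le_iSup_of_le (fun j => k j + s)
    (le_iSup_of_le (fun a b hab => by simpa using hk hab) (le_iSup_of_le (by simp) le_rfl))))
  congr 1
  refine Finset.sum_congr rfl fun j _ => ?_
  rw [← mul_sub, abs_mul, he, one_mul]

/-- The variation is unchanged by a shift of the index and a global sign. -/
lemma varNorm_shift (r : ℝ) (g : ℤ → ℝ) (s : ℤ) (e : ℝ) (he : |e| = 1) :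
    varNorm r Set.univ (fun k => e * g (k + s)) = varNorm r Set.univ g := by
  refine le_antisymm (varNorm_shift_le r g s e he) ?_
  have h := varNorm_shift_le r (fun k => e * g (k + s)) (-s) e he
  have hee : e * e = 1 := by rw [← abs_mul_abs_self, he, one_mul]
  have : (fun k => e * (e * g (k + -s + s))) = g := by
    funext k; rw [← mul_assoc, hee, one_mul, neg_add_cancel_right]
  rwa [this] at h

/-- **Equation (2.4).** For an `i'`-overlapping tree `T` and `i ≠ i'`, the `r`-variation of the
truncated tree sums equals the `r`-variation of the dyadic averages of the full (signed) tree
sum: for every `x ∈ [0,∞)`,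
`‖∑_{P ∈ T, |I_P| ≥ 2^k} c_P φ_{P_i}(x)‖_{V^r_k}
  = ‖A_k[sgn(φ_{p_T}) ∑_{P ∈ T} c_P φ_{P_i}](x)‖_{V^r_k}`. -/
theorem variation_of_truncated_tree_sums
    (r : ℝ) (hr : 1 ≤ r) (i i' : Fin 4) (hne : i ≠ i')
    (T : Finset Quartile) (ξ : ℝ) (It : DyadicInterval)
    (hT : IsOverlapping i' T ξ It)
    (c : Quartile → ℝ) (x : ℝ) (hx : 0 ≤ x) :
    varNorm r Set.univ (fun k => ∑ P ∈ T.filter (fun P => k ≤ P.I.k), c P * P.wp i x) =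
      varNorm r Set.univ (fun k =>
        dyadicAvg k
          (fun y => Real.sign (wavePacket It (topFreq It ξ) y) * ∑ P ∈ T, c P * P.wp i y) x) := by
  obtain ⟨⟨hξ, htree⟩, hover⟩ := hT
  set s := scaleShift i i' with hs
  set S : ℝ → ℝ := fun y => Real.sign (wavePacket It (topFreq It ξ) y) with hS
  have hG : ∀ P : Quartile, ∃ G : ℤ → ℝ, P ∈ T → ∀ y, S y * P.wp i y =
      G (dyPos (P.I.k - s + 1) y) * radSign (P.I.k - s) y := by
    intro P
    by_cases hP : P ∈ T
    · obtain ⟨G, h⟩ := signed_wp_eq hne hξ (htree P hP).1 (hover P hP)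
      exact ⟨G, fun _ => h⟩
    · exact ⟨0, fun h => absurd h hP⟩
  choose G hG using hG
  have havg : ∀ k : ℤ, dyadicAvg k (fun y => S y * ∑ P ∈ T, c P * P.wp i y) x =
      S x * ∑ P ∈ T.filter (fun P => k + s ≤ P.I.k), c P * P.wp i x := by
    intro k
    have h1 : (fun y => S y * ∑ P ∈ T, c P * P.wp i y) = fun y => ∑ P ∈ T,
        c P * (G P (dyPos (P.I.k - s + 1) y) * radSign (P.I.k - s) y) := by
      funext y
      rw [Finset.mul_sum]
      refine Finset.sum_congr rfl fun P hP => ?_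
      rw [← hG P hP y]; ring
    have h2 : dyadicAvg k (fun y => S y * ∑ P ∈ T, c P * P.wp i y) x = ∑ P ∈ T, c P *
        dyadicAvg k (fun y => G P (dyPos (P.I.k - s + 1) y) * radSign (P.I.k - s) y) x := by
      rw [h1]
      unfold dyadicAvg
      rw [integral_finsetSum _
        (fun P _ => (integrableOn_haar (G P) (P.I.k - s) k x).const_mul (c P)), Finset.mul_sum]
      refine Finset.sum_congr rfl fun P _ => ?_
      rw [integral_const_mul]; ring
    rw [h2, Finset.sum_filter, Finset.mul_sum]
    refine Finset.sum_congr rfl fun P hP => ?_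
    split_ifs with hk
    · rw [dyadicAvg_haar_of_le _ (by omega), ← hG P hP x]; ring
    · rw [dyadicAvg_haar_of_lt _ (by omega)]; ring
  by_cases hxT : x ∈ It.toSet
  · have he : |S x| = 1 := by
      simp only [hS, sign_wavePacket, if_pos ((mem_toSet_iff _ _).1 hxT), abs_walshProd]
    change _ = varNorm r Set.univ
      (fun k => dyadicAvg k (fun y => S y * ∑ P ∈ T, c P * P.wp i y) x)
    simp only [havg]
    exact (varNorm_shift r (fun k => ∑ P ∈ T.filter (fun P => k ≤ P.I.k), c P * P.wp i x)
      s (S x) he).symm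
  · -- Off `I_T` both functions of `k` vanish identically, all packets being supported in `I_T`.
    have hz : ∀ P ∈ T, P.wp i x = 0 := fun P hP => by
      unfold Quartile.wp wavePacket
      exact Set.indicator_of_notMem (fun h => hxT ((htree P hP).1 h)) _
    have hz' : ∀ k : ℤ, ∑ P ∈ T.filter (fun P => k ≤ P.I.k), c P * P.wp i x = 0 := fun k =>
      Finset.sum_eq_zero fun P hP => by rw [hz P (Finset.mem_filter.1 hP).1, mul_zero]
    change _ = varNorm r Set.univ
      (fun k => dyadicAvg k (fun y => S y * ∑ P ∈ T, c P * P.wp i y) x)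
    simp only [havg, hz', mul_zero]
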